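/- Let g : ℝ → ℝ be infinitely differentiable, and let ĝ₀ = (1/π)∫_{−1}^{1} g(x)/√(1−x²) dx and ĝₙ = (2/π)∫_{−1}^{1} g(x)·Tₙ(x)/√(1−x²) dx for n ≥ 1 be its Fourier–Chebyshev coefficients. Then the series α(x) := Σ_{n=0}^{∞} (ĝₙ/σₙ)·Tₙ(x), with σ₀ = ln(2)/2 and σₙ = 1/(2n) for n ≥ 1, converges uniformly on [−1,1] to a function that coincides on [−1,1] with an infinitely differentiable function on ℝ, and the function λ(x) := α(x)/√(1−x²) satisfies −(1/(2π))∫_{−1}^{1} ln|x−y|·λ(y) dy = g(x) for every x ∈ (−1,1). In particular the solution of the Laplace single-layer equation S₀λ = g with smooth right-hand side g has the form λ = α/√(1−x²) with α smooth on [−1,1]. -/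

import Mathlib

open Real Set MeasureTheory intervalIntegral Filter Finset

/-- The `n`-th Chebyshev polynomial of the first kind, as a real function. -/
noncomputable def chebT (n : ℕ) : ℝ → ℝ := fun x => (Polynomial.Chebyshev.T ℝ n).eval x

/-- The eigenvalues of the weighted Laplace single-layer operator:
`σ₀ = ln 2 / 2` and `σₙ = 1/(2n)` for `n ≥ 1`. -/
noncomputable def sigmaCheb : ℕ → ℝ := fun n =>
  if n = 0 then Real.log 2 / 2 else 1 / (2 * n)

/-- The Fourier–Chebyshev coefficients of a function. -/
noncomputable def fourierCheb (g : ℝ → ℝ) : ℕ → ℝ := fun n =>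
  if n = 0 then (1 / π) * ∫ x in (-1 : ℝ)..1, g x / Real.sqrt (1 - x ^ 2)
  else (2 / π) * ∫ x in (-1 : ℝ)..1, g x * chebT n x / Real.sqrt (1 - x ^ 2)

/-- Powers of the frequency times the Fourier integrals of a smooth `2π`-periodic function stay
bounded. -/
theorem exists_bound_pow_mul_fourier_integral (k : ℕ) :
    ∀ F : ℝ → ℝ, ContDiff ℝ (⊤ : ℕ∞) F → Function.Periodic F (2 * π) →
      ∃ C : ℝ, ∀ n : ℕ, (n : ℝ) ^ k * |∫ t in (-π)..π, F t * cos (n * t)| ≤ C ∧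
        (n : ℝ) ^ k * |∫ t in (-π)..π, F t * sin (n * t)| ≤ C := by
  induction k with
  | zero =>
    intro F hF _
    have hbound : ∀ u : ℝ → ℝ, Continuous u → (∀ t, |u t| ≤ 1) →
        |∫ t in (-π)..π, F t * u t| ≤ ∫ t in (-π)..π, |F t| := by
      intro u hu hu1
      refine (abs_integral_le_integral_abs (by linarith [pi_pos])).trans ?_
      refine integral_mono_on (by linarith [pi_pos]) ?_ ?_ fun t _ => ?_
      · exact (hF.continuous.mul hu).abs.intervalIntegrable _ _
      · exact hF.continuous.abs.intervalIntegrable _ _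
      · rw [abs_mul]
        exact mul_le_of_le_one_right (abs_nonneg _) (hu1 t)
    refine ⟨∫ t in (-π)..π, |F t|, fun n => ?_⟩
    simp only [pow_zero, one_mul]
    exact ⟨hbound _ (by fun_prop) fun t => abs_cos_le_one _,
      hbound _ (by fun_prop) fun t => abs_sin_le_one _⟩
  | succ k ih =>
    intro F hF hper
    have hd : ContDiff ℝ (⊤ : ℕ∞) (deriv F) := (contDiff_infty_iff_deriv.mp hF).2
    have hdper : Function.Periodic (deriv F) (2 * π) := by
      intro t
      rw [← deriv_comp_add_const]
      congr 1
      exact funext hper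
    have hFd : ∀ t, HasDerivAt F (deriv F t) t := fun t =>
      ((contDiff_infty_iff_deriv.mp hF).1 t).hasDerivAt
    have hends : F π = F (-π) := by
      have := hper (-π)
      rw [← this]; congr 1; ring
    obtain ⟨C, hC⟩ := ih (deriv F) hd hdper
    have hcos : ∀ n : ℕ, (n : ℝ) * ∫ t in (-π)..π, F t * cos (n * t)
        = -∫ t in (-π)..π, deriv F t * sin (n * t) := by
      intro n
      have h := integral_mul_deriv_eq_deriv_mul (a := -π) (b := π) (u := F) (u' := deriv F)
        (v := fun t => sin (n * t)) (v' := fun t => n * cos (n * t)) (fun t _ => hFd t)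
        (fun t _ => by simpa [mul_comm] using ((hasDerivAt_id t).const_mul (n : ℝ)).sin)
        (hd.continuous.intervalIntegrable _ _)
        (Continuous.intervalIntegrable (by fun_prop) _ _)
      simp only [mul_neg, sin_neg, sin_nat_mul_pi, mul_zero, neg_zero, sub_zero, zero_sub] at h
      rw [← h, ← intervalIntegral.integral_const_mul]
      congr 1; ext t; ring
    have hsin : ∀ n : ℕ, (n : ℝ) * ∫ t in (-π)..π, F t * sin (n * t)
        = ∫ t in (-π)..π, deriv F t * cos (n * t) := by
      intro n
      have h := integral_mul_deriv_eq_deriv_mul (a := -π) (b := π) (u := F) (u' := deriv F)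
        (v := fun t => cos (n * t)) (v' := fun t => -(n * sin (n * t))) (fun t _ => hFd t)
        (fun t _ => by simpa [mul_comm] using ((hasDerivAt_id t).const_mul (n : ℝ)).cos)
        (hd.continuous.intervalIntegrable _ _)
        (Continuous.intervalIntegrable (by fun_prop) _ _)
      simp only [mul_neg, cos_neg, hends, sub_self, zero_sub,
        intervalIntegral.integral_neg, neg_inj] at h
      rw [← h, ← intervalIntegral.integral_const_mul]
      congr 1; ext t; ring
    refine ⟨C, fun n => ?_⟩
    have hn : |(n : ℝ)| = n := abs_of_nonneg (Nat.cast_nonneg n)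
    constructor
    · have := (hC n).2
      rwa [← abs_neg, ← hcos n, abs_mul, hn, ← mul_assoc, ← pow_succ] at this
    · have := (hC n).1
      rwa [← hsin n, abs_mul, hn, ← mul_assoc, ← pow_succ] at this

theorem eval_one_iterate_derivative_chebyshev_le (n k : ℕ) :
    (Polynomial.derivative^[k] (Polynomial.Chebyshev.T ℝ n)).eval 1 ≤ ((n : ℝ) ^ 2) ^ k := by
  induction k with
  | zero => simp
  | succ k ih =>
    have hrec := Polynomial.Chebyshev.iterate_derivative_T_eval_one_recurrence (R := ℝ) n k
    have h0 : ∀ j : ℕ,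
        0 ≤ (Polynomial.derivative^[j] (Polynomial.Chebyshev.T ℝ n)).eval 1 := fun j =>
      (abs_nonneg _).trans (Polynomial.Chebyshev.abs_iterate_derivative_T_real_le n j (x := 1)
        (by simp))
    have h1 := h0 k
    have h2 := h0 (k + 1)
    push_cast at hrec
    have h3 : (0 : ℝ) ≤ k := Nat.cast_nonneg k
    have h4 : (n : ℝ) ^ 2 * (Polynomial.derivative^[k] (Polynomial.Chebyshev.T ℝ n)).eval 1
        ≤ (n : ℝ) ^ 2 * ((n : ℝ) ^ 2) ^ k := mul_le_mul_of_nonneg_left ih (sq_nonneg _)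
    rw [pow_succ']
    nlinarith [mul_nonneg h3 h2, mul_nonneg (sq_nonneg (k : ℝ)) h1]

/-- Just outside `[-1, 1]`, at distance `1 / (n + 1) ^ 2`, the derivatives of `Tₙ` still obey
the Markov growth rate. -/
theorem abs_iterate_derivative_chebyshev_le (n k : ℕ) {x : ℝ}
    (hx : |x| ≤ 1 + 1 / ((n : ℝ) + 1) ^ 2) :
    |(Polynomial.derivative^[k] (Polynomial.Chebyshev.T ℝ n)).eval x|
      ≤ exp 1 * (((n : ℝ) + 1) ^ 2) ^ k := by
  set M : ℝ := ((n : ℝ) + 1) ^ 2 with hM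
  have hM0 : 0 < M := by positivity
  obtain ⟨y, hy, hxy⟩ : ∃ y : ℝ, |y| ≤ 1 ∧ |x - y| ≤ 1 / M := by
    have hp : 0 < 1 / M := by positivity
    rw [abs_le] at hx
    rcases le_total x (-1) with h | h
    · exact ⟨-1, by simp, by rw [abs_le]; constructor <;> linarith [hx.1]⟩
    rcases le_total x 1 with h' | h'
    · exact ⟨x, abs_le.mpr ⟨h, h'⟩, by simpa using hp.le⟩
    · exact ⟨1, by simp, by rw [abs_le]; constructor <;> linarith [hx.2]⟩
  have hbd : ∀ j : ℕ,
      |(Polynomial.derivative^[j] (Polynomial.Chebyshev.T ℝ n)).eval y| ≤ M ^ j := fun j =>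
    ((Polynomial.Chebyshev.abs_iterate_derivative_T_real_le n j hy).trans
      (eval_one_iterate_derivative_chebyshev_le n j)).trans
      (pow_le_pow_left₀ (sq_nonneg _) (pow_le_pow_left₀ (by positivity) (by linarith) 2) j)
  set p := Polynomial.derivative^[k] (Polynomial.Chebyshev.T ℝ n) with hp
  have htaylor : p.eval x = ∑ j ∈ Finset.range (p.natDegree + 1),
      (Polynomial.derivative^[j] p).eval y / (j.factorial : ℝ) * (x - y) ^ j := by
    have h1 : p.eval x = (Polynomial.taylor y p).eval (x - y) := by
      rw [Polynomial.taylor_eval]; congr 1; ring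
    rw [h1, Polynomial.eval_eq_sum_range, Polynomial.natDegree_taylor]
    refine Finset.sum_congr rfl fun j _ => ?_
    rw [Polynomial.taylor_coeff]
    have h2 := congrArg (Polynomial.eval y)
      (congrFun (Polynomial.factorial_smul_hasseDeriv (R := ℝ) j) p)
    rw [LinearMap.smul_apply, Polynomial.eval_smul, nsmul_eq_mul] at h2
    rw [← h2]
    field_simp
  rw [htaylor]
  refine (Finset.abs_sum_le_sum_abs _ _).trans ?_
  have hterm : ∀ j ∈ Finset.range (p.natDegree + 1),
      |(Polynomial.derivative^[j] p).eval y / (j.factorial : ℝ) * (x - y) ^ j|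
        ≤ (1 : ℝ) ^ j / (j.factorial : ℝ) * M ^ k := by
    intro j _
    have h1 := hbd (j + k)
    rw [Function.iterate_add_apply, ← hp] at h1
    rw [abs_mul, abs_div, abs_pow, Nat.abs_cast]
    calc _ ≤ M ^ (j + k) / (j.factorial : ℝ) * (1 / M) ^ j := by gcongr
      _ = _ := by
        rw [pow_add, one_div, inv_pow, one_pow]
        field_simp
  refine (Finset.sum_le_sum hterm).trans ?_
  rw [← Finset.sum_mul]
  exact mul_le_mul_of_nonneg_right (sum_le_exp_of_nonneg zero_le_one _) (by positivity)

theorem exists_bound_iteratedDeriv_smoothTransition (k : ℕ) :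
    ∃ C : ℝ, ∀ x, |iteratedDeriv k smoothTransition x| ≤ C := by
  have hst : ContDiff ℝ k smoothTransition := Real.smoothTransition.contDiff
  obtain ⟨C, hC⟩ := (isCompact_Icc (a := (0 : ℝ)) (b := 1)).exists_bound_of_continuousOn
    (hst.continuous_iteratedDeriv' k).continuousOn
  have hconst : ∀ c x : ℝ, |c| ≤ 1 → smoothTransition =ᶠ[nhds x] (fun _ => c) →
      |iteratedDeriv k smoothTransition x| ≤ 1 := by
    intro c x hc h
    rw [h.iteratedDeriv_eq, iteratedDeriv_const]
    split_ifs <;> simp [hc]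
  refine ⟨max C 1, fun x => ?_⟩
  rcases lt_or_ge x 0 with h | h
  · refine (hconst 0 x (by simp) ?_).trans (le_max_right _ _)
    filter_upwards [Iio_mem_nhds h] with y hy
    exact Real.smoothTransition.zero_of_nonpos (le_of_lt hy)
  rcases lt_or_ge 1 x with h' | h'
  · refine (hconst 1 x (by simp) ?_).trans (le_max_right _ _)
    filter_upwards [Ioi_mem_nhds h'] with y hy
    exact Real.smoothTransition.one_of_one_le (le_of_lt hy)
  · exact (hC x ⟨h, h'⟩).trans (le_max_left _ _)

theorem norm_iteratedFDeriv_mul_le_of_pow_bounds {f g : ℝ → ℝ} (hf : ContDiff ℝ (⊤ : ℕ∞) f)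
    (hg : ContDiff ℝ (⊤ : ℕ∞) g) {a b : ℕ → ℝ} {M x : ℝ}
    (ha : ∀ k, ‖iteratedFDeriv ℝ k f x‖ ≤ a k * M ^ k)
    (hb : ∀ k, ‖iteratedFDeriv ℝ k g x‖ ≤ b k * M ^ k) (k : ℕ) :
    ‖iteratedFDeriv ℝ k (fun y => f y * g y) x‖
      ≤ (∑ i ∈ Finset.range (k + 1), (k.choose i : ℝ) * a i * b (k - i)) * M ^ k := by
  refine (norm_iteratedFDeriv_mul_le hf hg x (mod_cast le_top)).trans ?_
  rw [Finset.sum_mul]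
  refine Finset.sum_le_sum fun i hi => ?_
  have hik : i ≤ k := Nat.lt_succ_iff.mp (Finset.mem_range.mp hi)
  calc _ ≤ (k.choose i : ℝ) * (a i * M ^ i) * (b (k - i) * M ^ (k - i)) := by
        have h1 := (norm_nonneg _).trans (ha i)
        gcongr
        exacts [ha i, hb _]
    _ = _ := by
      rw [← Nat.add_sub_of_le hik, pow_add, Nat.add_sub_of_le hik]
      ring

theorem contDiff_chebT (n : ℕ) : ContDiff ℝ (⊤ : ℕ∞) (chebT n) := by
  simpa [chebT, Function.comp_def] using!
    (Polynomial.Chebyshev.T ℝ n).contDiff_aeval (𝕜 := ℝ) (⊤ : ℕ∞)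

/-- A smooth function on `ℝ` which agrees with `Tₙ` on `[-1, 1]` and is cut off at distance
`1 / (n + 1) ^ 2` from that interval. -/
noncomputable def chebExt (n : ℕ) : ℝ → ℝ := fun x =>
  smoothTransition ((1 + ((n : ℝ) + 1) ^ 2) + ((n : ℝ) + 1) ^ 2 * x) *
    smoothTransition ((1 + ((n : ℝ) + 1) ^ 2) + (-((n : ℝ) + 1) ^ 2) * x) * chebT n x

theorem chebExt_eq_chebT (n : ℕ) {x : ℝ} (hx : x ∈ Icc (-1 : ℝ) 1) :
    chebExt n x = chebT n x := by
  have hM : (0 : ℝ) ≤ ((n : ℝ) + 1) ^ 2 := by positivity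
  rw [chebExt, Real.smoothTransition.one_of_one_le (by nlinarith [hx.1]),
    Real.smoothTransition.one_of_one_le (by nlinarith [hx.2]), one_mul, one_mul]

theorem contDiff_smoothTransition_affine (a c : ℝ) :
    ContDiff ℝ (⊤ : ℕ∞) (fun x => smoothTransition (a + c * x)) :=
  Real.smoothTransition.contDiff.comp (contDiff_const.add (contDiff_const.mul contDiff_id))

theorem contDiff_chebExt (n : ℕ) : ContDiff ℝ (⊤ : ℕ∞) (chebExt n) :=
  ((contDiff_smoothTransition_affine _ _).mul (contDiff_smoothTransition_affine _ _)).mul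
    (contDiff_chebT n)

theorem iteratedDeriv_polynomial_eval (p : Polynomial ℝ) (k : ℕ) :
    iteratedDeriv k (fun x => p.eval x) = fun x => (Polynomial.derivative^[k] p).eval x := by
  induction k with
  | zero => simp
  | succ k ih =>
    rw [iteratedDeriv_succ, ih]
    ext x
    rw [Polynomial.deriv, Function.iterate_succ_apply']

theorem exists_bound_iteratedFDeriv_chebExt :
    ∃ D : ℕ → ℝ, ∀ (k n : ℕ) (x : ℝ),
      ‖iteratedFDeriv ℝ k (chebExt n) x‖ ≤ D k * (((n : ℝ) + 1) ^ 2) ^ k := by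
  choose C hC using exists_bound_iteratedDeriv_smoothTransition
  have hC0 : ∀ k, 0 ≤ C k := fun k => (abs_nonneg _).trans (hC k 0)
  have haff : ∀ (k : ℕ) (a c x : ℝ),
      ‖iteratedFDeriv ℝ k (fun x => smoothTransition (a + c * x)) x‖ ≤ C k * |c| ^ k := by
    intro k a c x
    rw [norm_iteratedFDeriv_eq_norm_iteratedDeriv,
      iteratedDeriv_comp_const_mul (f := fun y => smoothTransition (a + y))
        (Real.smoothTransition.contDiff.comp (contDiff_const.add contDiff_id)) c,
      iteratedDeriv_comp_const_add, norm_mul, norm_pow, Real.norm_eq_abs, Real.norm_eq_abs,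
      mul_comm]
    exact mul_le_mul_of_nonneg_right (hC k _) (by positivity)
  set B : ℕ → ℝ := fun k => ∑ i ∈ Finset.range (k + 1), (k.choose i : ℝ) * C i * C (k - i)
    with hB
  set D : ℕ → ℝ := fun k => ∑ i ∈ Finset.range (k + 1), (k.choose i : ℝ) * B i * exp 1 with hD
  have hB0 : ∀ k, 0 ≤ B k := fun k => Finset.sum_nonneg fun i _ =>
    mul_nonneg (mul_nonneg (Nat.cast_nonneg _) (hC0 _)) (hC0 _)
  have hD0 : ∀ k, 0 ≤ D k := fun k => Finset.sum_nonneg fun i _ =>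
    mul_nonneg (mul_nonneg (Nat.cast_nonneg _) (hB0 _)) (exp_pos _).le
  refine ⟨D, fun k n x => ?_⟩
  set M : ℝ := ((n : ℝ) + 1) ^ 2 with hM
  have hM0 : 0 < M := by positivity
  have hMM : M * (1 / M) = 1 := mul_one_div_cancel hM0.ne'
  by_cases hx : |x| ≤ 1 + 1 / M
  · refine norm_iteratedFDeriv_mul_le_of_pow_bounds (b := fun _ => exp 1)
      ((contDiff_smoothTransition_affine _ _).mul (contDiff_smoothTransition_affine _ _))
      (contDiff_chebT n) (fun j => ?_) (fun j => ?_) k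
    · refine norm_iteratedFDeriv_mul_le_of_pow_bounds (contDiff_smoothTransition_affine _ _)
        (contDiff_smoothTransition_affine _ _) (fun i => ?_) (fun i => ?_) j
      · simpa only [abs_of_pos hM0] using haff i (1 + M) M x
      · simpa only [abs_neg, abs_of_pos hM0] using haff i (1 + M) (-M) x
    · rw [norm_iteratedFDeriv_eq_norm_iteratedDeriv]
      unfold chebT
      rw [iteratedDeriv_polynomial_eval]
      exact abs_iterate_derivative_chebyshev_le n j hx
  · have hzero : chebExt n =ᶠ[nhds x] fun _ => 0 := by
      have hopen : IsOpen {y : ℝ | 1 + 1 / M < |y|} :=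
        isOpen_lt continuous_const continuous_abs
      filter_upwards [hopen.mem_nhds (not_le.mp hx)] with y hy
      rcases lt_abs.mp hy with h | h
      · have h1 : (1 + M) + (-M) * y ≤ 0 := by nlinarith
        simp only [chebExt, ← hM, Real.smoothTransition.zero_of_nonpos h1, mul_zero, zero_mul]
      · have h1 : (1 + M) + M * y ≤ 0 := by nlinarith
        simp only [chebExt, ← hM, Real.smoothTransition.zero_of_nonpos h1, zero_mul]
    rw [norm_iteratedFDeriv_eq_norm_iteratedDeriv, hzero.iteratedDeriv_eq, iteratedDeriv_const]
    simp only [ite_self, norm_zero]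
    have := hD0 k
    positivity

theorem integral_eval_chebyshev_U_even (n : ℕ) :
    ∫ x, (Polynomial.Chebyshev.U ℝ (2 * n)).eval x ∂Polynomial.Chebyshev.measureT = π := by
  induction n with
  | zero =>
    have := Polynomial.Chebyshev.integral_eval_T_real_measureT_zero
    simpa using this
  | succ n ih =>
    have hrec := Polynomial.Chebyshev.U_eq_two_mul_T_add_U ℝ (2 * n)
    have hT := Polynomial.Chebyshev.integral_eval_T_real_measureT_of_ne_zero
      (n := 2 * (n : ℤ) + 2) (by positivity)
    push_cast
    rw [show (2 * ((n : ℤ) + 1)) = 2 * n + 2 by ring, hrec]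
    simp only [Polynomial.eval_add, Polynomial.eval_mul, Polynomial.eval_ofNat]
    rw [integral_add (Polynomial.Chebyshev.integrable_measureT (by fun_prop))
      (Polynomial.Chebyshev.integrable_measureT (by fun_prop)), MeasureTheory.integral_const_mul,
      hT, ih]
    ring

theorem integral_cos_mul_eval_chebyshev_U (n : ℕ) :
    ∫ v in (0 : ℝ)..π, cos v * (Polynomial.Chebyshev.U ℝ (2 * n + 1)).eval (cos v) = π := by
  have hT := Polynomial.Chebyshev.integral_eval_T_real_measureT_of_ne_zero
    (n := 2 * (n : ℤ) + 2) (by positivity)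
  have hU := integral_eval_chebyshev_U_even (n + 1)
  push_cast at hU
  rw [show (2 * ((n : ℤ) + 1)) = 2 * n + 2 by ring] at hU
  have hrec := Polynomial.Chebyshev.T_eq_U_sub_X_mul_U ℝ (2 * n + 2)
  rw [show (2 * (n : ℤ) + 2 - 1) = 2 * n + 1 by ring] at hrec
  rw [← Polynomial.Chebyshev.integral_measureT_eq_integral_cos
    (f := fun x => x * (Polynomial.Chebyshev.U ℝ (2 * n + 1)).eval x)]
  have hpt : ∀ x : ℝ, x * (Polynomial.Chebyshev.U ℝ (2 * n + 1)).eval x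
      = (Polynomial.Chebyshev.U ℝ (2 * n + 2)).eval x
        - (Polynomial.Chebyshev.T ℝ (2 * n + 2)).eval x := by
    intro x
    rw [hrec]
    simp
  simp only [hpt]
  rw [integral_sub (Polynomial.Chebyshev.integrable_measureT (by fun_prop))
    (Polynomial.Chebyshev.integrable_measureT (by fun_prop)), hT, hU, sub_zero]

theorem integral_log_sin_mul_cos_two_mul (n : ℕ) (hn : n ≠ 0) :
    ∫ v in (0 : ℝ)..π, log (sin v) * cos (2 * n * v) = -(π / (2 * n)) := by
  obtain ⟨m, rfl⟩ := Nat.exists_eq_succ_of_ne_zero hn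
  set N : ℝ := 2 * ((m + 1 : ℕ) : ℝ) with hN
  have hN0 : 0 < N := by positivity
  set W : ℝ → ℝ := fun v => (Polynomial.Chebyshev.U ℝ (2 * m + 1)).eval (cos v) with hW
  have hWc : Continuous W := by fun_prop
  have hWs : ∀ v, W v * sin v = sin (N * v) := by
    intro v
    have := Polynomial.Chebyshev.U_real_cos v (2 * m + 1)
    rw [hW]
    simp only [this, hN]
    push_cast
    ring_nf
  have hlog : IntervalIntegrable (fun v => log (sin v)) volume 0 π := intervalIntegrable_log_sin
  have hint : IntervalIntegrable (fun v => log (sin v) * cos (N * v)) volume 0 π :=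
    hlog.mul_continuousOn (by fun_prop)
  have hint2 : IntervalIntegrable (fun v => cos v * W v) volume 0 π :=
    Continuous.intervalIntegrable (by fun_prop) _ _
  have hF : ∀ v, W v * (sin v * log (sin v)) = log (sin v) * sin (N * v) := by
    intro v
    rw [← hWs]; ring
  have hparts := integral_eq_sub_of_hasDerivAt_of_le (a := 0) (b := π)
    (f := fun v => W v * (sin v * log (sin v)))
    (f' := fun v => cos v * W v + N * (log (sin v) * cos (N * v))) pi_pos.le
    (hWc.mul (continuous_mul_log.comp continuous_sin)).continuousOn ?_
    (hint2.add (hint.const_mul N))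
  · rw [intervalIntegral.integral_add hint2 (hint.const_mul N),
      intervalIntegral.integral_const_mul, integral_cos_mul_eval_chebyshev_U] at hparts
    simp only [sin_pi, sin_zero, zero_mul, mul_zero, sub_zero] at hparts
    field_simp
    linarith
  · intro v hv
    have hs : 0 < sin v := sin_pos_of_mem_Ioo hv
    simp only [hF]
    have h1 := ((hasDerivAt_sin v).log hs.ne').mul
      (((hasDerivAt_id v).const_mul N).sin)
    refine HasDerivAt.congr_deriv h1 ?_
    rw [id, ← hWs]
    field_simp

/-- The Fourier cosine integrals of the logarithmic kernel on the circle. -/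
theorem integral_log_sin_half_mul_cos (n : ℕ) :
    ∫ u in (0 : ℝ)..(2 * π), log (sin (u / 2)) * cos (n * u)
      = if n = 0 then -(2 * π * log 2) else -(π / n) := by
  have hsub := intervalIntegral.integral_comp_div (a := 0) (b := 2 * π)
    (fun v => log (sin v) * cos (2 * n * v)) (two_ne_zero' ℝ)
  have hl : ∀ u : ℝ, log (sin (u / 2)) * cos (2 * n * (u / 2)) = log (sin (u / 2)) * cos (n * u) :=
    fun u => by ring_nf
  simp only [hl, zero_div, mul_div_cancel_left₀ π (two_ne_zero' ℝ), smul_eq_mul] at hsub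
  rw [hsub]
  split_ifs with h
  · subst h
    simp only [Nat.cast_zero, mul_zero, zero_mul, cos_zero, mul_one, integral_log_sin_zero_pi]
    ring
  · rw [integral_log_sin_mul_cos_two_mul n h]
    have : (n : ℝ) ≠ 0 := Nat.cast_ne_zero.mpr h
    field_simp

theorem intervalIntegrable_log_sin_half_add (φ a b : ℝ) :
    IntervalIntegrable (fun t => log (sin ((t + φ) / 2))) volume a b := by
  have h : AnalyticOnNhd ℝ (fun t : ℝ => sin ((t + φ) / 2)) Set.univ := by
    intro t _
    fun_prop
  exact (h.mono (Set.subset_univ _)).meromorphicOn.intervalIntegrable_log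

theorem intervalIntegrable_log_abs_sub_cos (x a b : ℝ) :
    IntervalIntegrable (fun t => log |x - cos t|) volume a b := by
  have h : AnalyticOnNhd ℝ (fun t : ℝ => x - cos t) Set.univ := by
    intro t _
    fun_prop
  exact (h.mono (Set.subset_univ _)).meromorphicOn.intervalIntegrable_log_norm

theorem integral_log_sin_half_shift_mul_cos (φ : ℝ) (n : ℕ) :
    ∫ t in (-π)..π, log (sin ((t + φ) / 2)) * cos (n * t)
      = cos (n * φ) * (∫ u in (0 : ℝ)..(2 * π), log (sin (u / 2)) * cos (n * u))
        + sin (n * φ) * ∫ u in (0 : ℝ)..(2 * π), log (sin (u / 2)) * sin (n * u) := by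
  have hper : Function.Periodic
      (fun u => log (sin (u / 2)) * cos (n * (u - φ))) (2 * π) := by
    intro u
    have h1 : (u + 2 * π) / 2 = u / 2 + π := by ring
    have h2 : (n : ℝ) * (u + 2 * π - φ) = n * (u - φ) + n * (2 * π) := by ring
    simp only [h1, h2, sin_add_pi, log_neg_eq_log, cos_add_nat_mul_two_pi]
  have hshift := intervalIntegral.integral_comp_add_right (a := -π) (b := π)
    (fun u => log (sin (u / 2)) * cos (n * (u - φ))) φ
  simp only [add_sub_cancel_right] at hshift
  rw [hshift, show π + φ = (-π + φ) + 2 * π by ring, hper.intervalIntegral_add_eq (-π + φ) 0,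
    zero_add, ← intervalIntegral.integral_const_mul, ← intervalIntegral.integral_const_mul]
  have hlog : IntervalIntegrable (fun u => log (sin (u / 2))) volume 0 (2 * π) := by
    simpa using intervalIntegrable_log_sin_half_add 0 0 (2 * π)
  rw [← intervalIntegral.integral_add
    ((hlog.mul_continuousOn (by fun_prop)).const_mul _)
    ((hlog.mul_continuousOn (by fun_prop)).const_mul _)]
  refine intervalIntegral.integral_congr fun u _ => ?_
  simp only [mul_sub, cos_sub]
  ring

theorem integral_neg_pi_pi_of_even {f : ℝ → ℝ} (hf : ∀ t, f (-t) = f t)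
    (hi : ∀ a b, IntervalIntegrable f volume a b) :
    ∫ t in (-π)..π, f t = 2 * ∫ t in (0 : ℝ)..π, f t := by
  rw [← intervalIntegral.integral_add_adjacent_intervals (hi (-π) 0) (hi 0 π)]
  have h := intervalIntegral.integral_comp_neg (a := 0) (b := π) f
  simp only [hf, neg_zero] at h
  rw [← h]; ring

/-- In the angular variable, `cos (n t)` is an eigenfunction of the logarithmic kernel. -/
theorem integral_log_abs_cos_sub_cos_mul_cos (φ : ℝ) (n : ℕ) :
    ∫ t in (0 : ℝ)..π, log |cos φ - cos t| * cos (n * t)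
      = -(2 * π * sigmaCheb n) * cos (n * φ) := by
  have hae : ∀ᵐ t ∂(volume : Measure ℝ), log |cos φ - cos t| * cos (n * t)
      = log 2 * cos (n * t) + log (sin ((t + φ) / 2)) * cos (n * t)
        + log (sin ((t + -φ) / 2)) * cos (n * t) := by
    have hcount : ∀ ψ : ℝ, {t : ℝ | sin ((t + ψ) / 2) = 0}.Countable := by
      intro ψ
      refine (Set.countable_range fun k : ℤ => 2 * (k * π) - ψ).mono ?_
      intro t ht
      obtain ⟨k, hk⟩ := sin_eq_zero_iff.mp ht
      exact ⟨k, by simp only [hk]; ring⟩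
    filter_upwards [(hcount φ).ae_notMem volume, (hcount (-φ)).ae_notMem volume] with t h1 h2
    replace h1 : sin ((t + φ) / 2) ≠ 0 := h1
    replace h2 : sin ((t + -φ) / 2) ≠ 0 := h2
    have hprod : cos φ - cos t = 2 * sin ((t + φ) / 2) * sin ((t + -φ) / 2) := by
      rw [cos_sub_cos, show (φ - t) / 2 = -((t + -φ) / 2) by ring, sin_neg, add_comm φ t]
      ring
    rw [log_abs, hprod, log_mul (mul_ne_zero two_ne_zero h1) h2, log_mul two_ne_zero h1]
    ring
  have hodd : ∀ t : ℝ, log |cos φ - cos (-t)| * cos (n * -t)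
      = log |cos φ - cos t| * cos (n * t) := by
    intro t
    rw [cos_neg, mul_neg, cos_neg]
  have heven := integral_neg_pi_pi_of_even
    (f := fun t => log |cos φ - cos t| * cos (n * t)) hodd fun a b =>
    (intervalIntegrable_log_abs_sub_cos (cos φ) a b).mul_continuousOn (by fun_prop)
  have hi0 : IntervalIntegrable (fun t => log 2 * cos (n * t)) volume (-π) π :=
    Continuous.intervalIntegrable (by fun_prop) _ _
  have hi : ∀ ψ, IntervalIntegrable (fun t => log (sin ((t + ψ) / 2)) * cos (n * t))
      volume (-π) π := fun ψ =>
    (intervalIntegrable_log_sin_half_add ψ _ _).mul_continuousOn (by fun_prop)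
  rw [intervalIntegral.integral_congr_ae (hae.mono fun t ht _ => ht),
    intervalIntegral.integral_add (hi0.add (hi φ)) (hi (-φ)),
    intervalIntegral.integral_add hi0 (hi φ), intervalIntegral.integral_const_mul,
    integral_log_sin_half_shift_mul_cos, integral_log_sin_half_shift_mul_cos,
    integral_log_sin_half_mul_cos] at heven
  rcases eq_or_ne n 0 with rfl | hn
  · simp only [mul_neg, cos_neg, sin_neg, if_true, sigmaCheb, Nat.cast_zero, zero_mul, cos_zero,
      intervalIntegral.integral_const, smul_eq_mul, sin_zero] at heven ⊢
    linarith
  · have hn' : (n : ℝ) ≠ 0 := Nat.cast_ne_zero.mpr hn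
    have hcos : ∫ t in (-π)..π, cos (n * t) = 0 := by
      rw [intervalIntegral.integral_comp_mul_left (fun t => cos t) hn']
      simp [sin_nat_mul_pi]
    simp only [mul_neg, cos_neg, sin_neg, hn, if_false, sigmaCheb, hcos, mul_zero] at heven ⊢
    field_simp at heven ⊢
    linarith

theorem chebT_cos (n : ℕ) (t : ℝ) : chebT n (cos t) = cos (n * t) := by
  simp [chebT]

theorem abs_chebT_le_one (n : ℕ) {x : ℝ} (hx : x ∈ Icc (-1 : ℝ) 1) : |chebT n x| ≤ 1 :=
  Polynomial.Chebyshev.abs_eval_T_real_le_one n (abs_le.mpr hx)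

theorem integral_div_sqrt_one_sub_sq (f : ℝ → ℝ) :
    ∫ x in (-1 : ℝ)..1, f x / Real.sqrt (1 - x ^ 2) = ∫ t in (0 : ℝ)..π, f (cos t) := by
  rw [← Polynomial.Chebyshev.integral_measureT_eq_integral_cos,
    Polynomial.Chebyshev.integral_measureT]
  simp only [div_eq_mul_inv, Real.sqrt_inv]

theorem fourierCheb_eq_integral_cos {g : ℝ → ℝ} (hg : Continuous g) (n : ℕ) :
    fourierCheb g n = (if n = 0 then 1 / (2 * π) else 1 / π) *
      ∫ t in (-π)..π, g (cos t) * cos (n * t) := by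
  rw [integral_neg_pi_pi_of_even (f := fun t => g (cos t) * cos (n * t))
    (fun t => by rw [cos_neg, mul_neg, cos_neg])
    (fun a b => Continuous.intervalIntegrable (by fun_prop) a b)]
  rw [fourierCheb]
  split_ifs with h
  · subst h
    rw [integral_div_sqrt_one_sub_sq]
    simp only [Nat.cast_zero, zero_mul, cos_zero, mul_one]
    field_simp
  · rw [integral_div_sqrt_one_sub_sq (fun x => g x * chebT n x)]
    simp only [chebT_cos]
    field_simp

theorem sigmaCheb_pos (n : ℕ) : 0 < sigmaCheb n := by
  rw [sigmaCheb]
  split_ifs with h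
  · have := log_pos one_lt_two
    positivity
  · have : 0 < n := Nat.pos_of_ne_zero h
    positivity

theorem inv_sigmaCheb_le (n : ℕ) : (sigmaCheb n)⁻¹ ≤ 4 * ((n : ℝ) + 1) := by
  rw [sigmaCheb]
  split_ifs with h
  · subst h
    have h1 := log_two_gt_d9
    rw [inv_le_comm₀ (by positivity) (by positivity)]
    norm_num
    linarith
  · rw [one_div, inv_inv]
    have : (0 : ℝ) ≤ n := n.cast_nonneg
    linarith

theorem exists_bound_succ_pow_mul_fourierCheb {g : ℝ → ℝ} (hg : ContDiff ℝ (⊤ : ℕ∞) g) (k : ℕ) :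
    ∃ C : ℝ, ∀ n : ℕ, ((n : ℝ) + 1) ^ k * |fourierCheb g n| ≤ C := by
  have hF : ContDiff ℝ (⊤ : ℕ∞) fun t => g (cos t) := hg.comp contDiff_cos
  have hp : Function.Periodic (fun t => g (cos t)) (2 * π) := fun t => by
    simp only [cos_add_two_pi]
  obtain ⟨C, hC⟩ := exists_bound_pow_mul_fourier_integral k _ hF hp
  obtain ⟨C', hC'⟩ := exists_bound_pow_mul_fourier_integral 0 _ hF hp
  refine ⟨2 ^ k * (C + C'), fun n => ?_⟩
  have h1 := (hC n).1
  have h2 := (hC' n).1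
  rw [pow_zero, one_mul] at h2
  rw [fourierCheb_eq_integral_cos hg.continuous, abs_mul]
  set I := |∫ t in (-π)..π, g (cos t) * cos (n * t)|
  have hI : 0 ≤ I := abs_nonneg _
  have hc : |if n = 0 then 1 / (2 * π) else 1 / π| ≤ 1 := by
    have := pi_gt_three
    rw [abs_of_nonneg (by split_ifs <;> positivity)]
    split_ifs
    · rw [div_le_one (by positivity)]; linarith
    · rw [div_le_one (by positivity)]; linarith
  have hn : ((n : ℝ) + 1) ^ k ≤ 2 ^ k * ((n : ℝ) ^ k + 1) := by
    rcases Nat.eq_zero_or_pos n with rfl | hn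
    · simp only [Nat.cast_zero, zero_add, one_pow]
      have : (1 : ℝ) ≤ 2 ^ k := one_le_pow₀ one_le_two
      have h0 : (0 : ℝ) ≤ 0 ^ k := by positivity
      nlinarith
    · have h1n : (1 : ℝ) ≤ n := by exact_mod_cast hn
      calc ((n : ℝ) + 1) ^ k ≤ (2 * n) ^ k := by gcongr; linarith
        _ = 2 ^ k * (n : ℝ) ^ k := mul_pow _ _ _
        _ ≤ _ := by gcongr; linarith
  calc ((n : ℝ) + 1) ^ k * (|if n = 0 then 1 / (2 * π) else 1 / π| * I)
      ≤ (2 ^ k * ((n : ℝ) ^ k + 1)) * (1 * I) := by gcongr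
    _ = 2 ^ k * ((n : ℝ) ^ k * I + I) := by ring
    _ ≤ _ := by gcongr

theorem summable_succ_pow_mul_abs_fourierCheb {g : ℝ → ℝ} (hg : ContDiff ℝ (⊤ : ℕ∞) g) (k : ℕ) :
    Summable fun n : ℕ => ((n : ℝ) + 1) ^ k * |fourierCheb g n| := by
  obtain ⟨C, hC⟩ := exists_bound_succ_pow_mul_fourierCheb hg (k + 2)
  have hs : Summable fun n : ℕ => C * (1 / ((n : ℝ) + 1) ^ 2) := by
    have := (summable_nat_add_iff 1).mpr (Real.summable_one_div_nat_pow.mpr one_lt_two)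
    exact (by simpa using this : Summable fun n : ℕ => 1 / ((n : ℝ) + 1) ^ 2).mul_left C
  refine hs.of_nonneg_of_le (fun n => by positivity) fun n => ?_
  rw [mul_one_div, le_div_iff₀ (by positivity)]
  calc _ = ((n : ℝ) + 1) ^ (k + 2) * |fourierCheb g n| := by ring
    _ ≤ C := hC n

theorem summable_abs_fourierCheb_div_sigmaCheb {g : ℝ → ℝ} (hg : ContDiff ℝ (⊤ : ℕ∞) g) (k : ℕ) :
    Summable fun n : ℕ => |fourierCheb g n / sigmaCheb n| * (((n : ℝ) + 1) ^ 2) ^ k := by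
  refine ((summable_succ_pow_mul_abs_fourierCheb hg (2 * k + 1)).mul_left 4).of_nonneg_of_le
    (fun n => by positivity) fun n => ?_
  rw [div_eq_mul_inv, abs_mul, abs_of_pos (inv_pos.mpr (sigmaCheb_pos n)), ← pow_mul]
  calc _ ≤ |fourierCheb g n| * (4 * ((n : ℝ) + 1)) * ((n : ℝ) + 1) ^ (2 * k) := by
        gcongr; exact inv_sigmaCheb_le n
    _ = _ := by ring

/-- The Chebyshev series of a smooth function converges to it. -/
theorem hasSum_fourierCheb_mul_cos {g : ℝ → ℝ} (hg : ContDiff ℝ (⊤ : ℕ∞) g) (φ : ℝ) :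
    HasSum (fun n : ℕ => fourierCheb g n * cos (n * φ)) (g (cos φ)) := by
  have : Fact (0 < 2 * π) := ⟨two_pi_pos⟩
  have hgc := hg.continuous
  let f : C(AddCircle (2 * π), ℂ) :=
    ⟨fun z => ((g (Real.Angle.cos z) : ℝ) : ℂ),
      Complex.continuous_ofReal.comp (hgc.comp Real.Angle.continuous_cos)⟩
  have hf : ∀ t : ℝ, f t = ((g (cos t) : ℝ) : ℂ) := fun t => rfl
  have hfour : ∀ (n : ℤ) (t : ℝ), fourier n (t : AddCircle (2 * π))
      = ((cos (n * t) : ℝ) : ℂ) + ((sin (n * t) : ℝ) : ℂ) * Complex.I := by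
    intro n t
    have hpi : (π : ℂ) ≠ 0 := by exact_mod_cast pi_ne_zero
    rw [fourier_coe_apply]
    push_cast
    rw [← Complex.exp_mul_I]
    congr 1
    field_simp
  have hcoeff : ∀ n : ℤ, fourierCoeff f n
      = ((1 / (2 * π) * ∫ t in (-π)..π, g (cos t) * cos (n * t) : ℝ) : ℂ) := by
    intro n
    have hsin : ∫ t in (-π)..π, g (cos t) * sin (n * t) = 0 := by
      have h := intervalIntegral.integral_comp_neg (a := -π) (b := π)
        (fun t => g (cos t) * sin (n * t))
      simp only [cos_neg, mul_neg, sin_neg, intervalIntegral.integral_neg, neg_neg] at h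
      linarith
    rw [fourierCoeff_eq_intervalIntegral f n (-π), show -π + 2 * π = π by ring]
    have hpt : ∀ t : ℝ, fourier (-n) (t : AddCircle (2 * π)) • f t
        = ((g (cos t) * cos (n * t) : ℝ) : ℂ) - ((g (cos t) * sin (n * t) : ℝ) : ℂ) * Complex.I := by
      intro t
      rw [hfour, hf, smul_eq_mul, Int.cast_neg, neg_mul, cos_neg, sin_neg]
      push_cast
      ring
    simp only [hpt]
    rw [intervalIntegral.integral_sub
      (Continuous.intervalIntegrable (by fun_prop) _ _)
      (Continuous.intervalIntegrable (by fun_prop) _ _),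
      intervalIntegral.integral_mul_const, intervalIntegral.integral_ofReal,
      intervalIntegral.integral_ofReal, hsin]
    simp
  have hsummand : ∀ n : ℕ, fourierCoeff f n • fourier n (φ : AddCircle (2 * π))
      + fourierCoeff f (-n) • fourier (-n) (φ : AddCircle (2 * π))
      = ((1 / π * (∫ t in (-π)..π, g (cos t) * cos (n * t)) * cos (n * φ) : ℝ) : ℂ) := by
    intro n
    rw [hcoeff, hcoeff, hfour, hfour]
    simp only [Int.cast_neg, Int.cast_natCast, neg_mul, cos_neg, sin_neg, smul_eq_mul]
    push_cast
    ring
  have hnat : Summable fun n : ℕ => fourierCoeff f n := by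
    refine Summable.of_norm_bounded (summable_succ_pow_mul_abs_fourierCheb hg 0) fun n => ?_
    rw [hcoeff, Complex.norm_real, fourierCheb_eq_integral_cos hgc, Real.norm_eq_abs, abs_mul,
      pow_zero, one_mul, abs_mul, Int.cast_natCast]
    gcongr
    split_ifs
    · rfl
    · have := pi_pos
      gcongr
      linarith
  have heven : ∀ n : ℤ, fourierCoeff f (-n) = fourierCoeff f n := by
    intro n
    simp only [hcoeff, Int.cast_neg, neg_mul, cos_neg]
  have hsum : Summable (fourierCoeff f) :=
    Summable.of_nat_of_neg hnat (by simpa only [heven] using hnat)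
  have h := (has_pointwise_sum_fourier_series_of_summable hsum (φ : AddCircle (2 * π))).nat_add_neg
  simp only [hsummand, hf] at h
  rw [hcoeff 0, fourier_zero, smul_eq_mul, mul_one, ← Complex.ofReal_add,
    Complex.hasSum_ofReal] at h
  set a := 1 / (2 * π) * ∫ t in (-π)..π, g (cos t) * cos (((0 : ℤ) : ℝ) * t) with ha
  have h' := h.sub (hasSum_ite_eq (0 : ℕ) a)
  rw [add_sub_cancel_right] at h'
  refine h'.congr_fun fun n => ?_
  rw [fourierCheb_eq_integral_cos hgc]
  split_ifs with hn
  · subst hn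
    rw [ha]
    simp only [Nat.cast_zero, Int.cast_zero, zero_mul, cos_zero, mul_one]
    ring
  · rw [sub_zero]

theorem contDiff_tsum_mul_chebExt {c : ℕ → ℝ}
    (hc : ∀ k : ℕ, Summable fun n : ℕ => |c n| * (((n : ℝ) + 1) ^ 2) ^ k) :
    ContDiff ℝ (⊤ : ℕ∞) fun x => ∑' n, c n * chebExt n x := by
  obtain ⟨D, hD⟩ := exists_bound_iteratedFDeriv_chebExt
  refine contDiff_tsum (v := fun k n => |c n| * (((n : ℝ) + 1) ^ 2) ^ k * D k)
    (fun n => contDiff_const.mul (contDiff_chebExt n)) (fun k _ => (hc k).mul_right _)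
    fun k n x _ => ?_
  have h : iteratedFDeriv ℝ k (fun x => c n * chebExt n x) x
      = c n • iteratedFDeriv ℝ k (chebExt n) x :=
    iteratedFDeriv_const_smul_apply' (a := c n)
      ((contDiff_chebExt n).of_le (by exact_mod_cast le_top)).contDiffAt
  rw [h, norm_smul, Real.norm_eq_abs]
  calc _ ≤ |c n| * (D k * (((n : ℝ) + 1) ^ 2) ^ k) := by gcongr; exact hD k n x
    _ = _ := by ring

/-- The logarithmic kernel acts termwise on absolutely convergent cosine series. -/
theorem hasSum_integral_log_abs_cos_sub_cos_mul {c : ℕ → ℝ} (hc : Summable fun n => |c n|)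
    (φ : ℝ) :
    HasSum (fun n : ℕ => -(2 * π * sigmaCheb n) * c n * cos (n * φ))
      (∫ t in (0 : ℝ)..π, log |cos φ - cos t| * ∑' n : ℕ, c n * cos (n * t)) := by
  have hlog := intervalIntegrable_log_abs_sub_cos (cos φ) 0 π
  have hint : ∀ n : ℕ, IntervalIntegrable
      (fun t => c n * (log |cos φ - cos t| * cos (n * t))) volume 0 π := fun n =>
    (hlog.mul_continuousOn (by fun_prop)).const_mul _
  have hnorm := ((intervalIntegrable_iff_integrableOn_Ioc_of_le pi_pos.le).mp hlog).norm
  have h := hasSum_integral_of_summable_integral_norm (μ := volume.restrict (Ioc 0 π))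
    (F := fun (n : ℕ) t => c n * (log |cos φ - cos t| * cos (n * t)))
    (fun n => (intervalIntegrable_iff_integrableOn_Ioc_of_le pi_pos.le).mp (hint n)) ?_
  · simp only [← intervalIntegral.integral_of_le pi_pos.le,
      intervalIntegral.integral_const_mul, integral_log_abs_cos_sub_cos_mul_cos] at h
    have hpt : ∀ t : ℝ, ∑' n : ℕ, c n * (log |cos φ - cos t| * cos (n * t))
        = log |cos φ - cos t| * ∑' n : ℕ, c n * cos (n * t) := fun t => by
      rw [← tsum_mul_left]
      exact tsum_congr fun n => mul_left_comm _ _ _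
    simp only [hpt] at h
    refine h.congr_fun fun n => ?_
    ring
  · refine (hc.mul_right (∫ t in Ioc 0 π, ‖log |cos φ - cos t|‖)).of_nonneg_of_le
      (fun n => by positivity) fun n => ?_
    rw [← MeasureTheory.integral_const_mul]
    refine MeasureTheory.integral_mono_of_nonneg (Eventually.of_forall fun t => norm_nonneg _)
      (hnorm.const_mul _) (Eventually.of_forall fun t => ?_)
    simp only [norm_mul, Real.norm_eq_abs]
    have := abs_cos_le_one (n * t)
    gcongr
    exact mul_le_of_le_one_right (abs_nonneg _) this

/-- For a smooth right-hand side `g`, the series `α = Σ (ĝₙ/σₙ) Tₙ` converges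
uniformly on `[-1,1]` to (the restriction of) a smooth function, and
`λ = α/√(1-x²)` solves the Laplace single-layer equation `S₀ λ = g`. -/
theorem single_layer_smooth_solution (g : ℝ → ℝ) (hg : ContDiff ℝ (⊤ : ℕ∞) g) :
    ∃ A : ℝ → ℝ, ContDiff ℝ (⊤ : ℕ∞) A ∧
      TendstoUniformlyOn
        (fun N x => ∑ n ∈ Finset.range N, (fourierCheb g n / sigmaCheb n) * chebT n x)
        A atTop (Icc (-1 : ℝ) 1) ∧
      ∀ x ∈ Ioo (-1 : ℝ) 1,
        -(1 / (2 * π)) * ∫ y in (-1 : ℝ)..1,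
            Real.log |x - y| * (A y / Real.sqrt (1 - y ^ 2))
          = g x := by
  set c : ℕ → ℝ := fun n => fourierCheb g n / sigmaCheb n with hc
  have hsum := summable_abs_fourierCheb_div_sigmaCheb hg
  have hsum0 : Summable fun n => |c n| := by simpa using hsum 0
  refine ⟨fun x => ∑' n, c n * chebExt n x, contDiff_tsum_mul_chebExt hsum, ?_, ?_⟩
  · have hunif := tendstoUniformlyOn_tsum_nat (f := fun n x => c n * chebT n x) hsum0
      (s := Icc (-1 : ℝ) 1) fun n x hx => by
        rw [norm_mul, Real.norm_eq_abs, Real.norm_eq_abs]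
        exact mul_le_of_le_one_right (abs_nonneg _) (abs_chebT_le_one n hx)
    refine hunif.congr_right fun x hx => tsum_congr fun n => ?_
    simp only [chebExt_eq_chebT n hx]
  · intro x hx
    obtain ⟨φ, rfl⟩ : ∃ φ, cos φ = x := ⟨arccos x, cos_arccos hx.1.le hx.2.le⟩
    have hA : ∀ t : ℝ, ∑' n, c n * chebExt n (cos t) = ∑' n : ℕ, c n * cos (n * t) := fun t =>
      tsum_congr fun n => by rw [chebExt_eq_chebT n ⟨neg_one_le_cos t, cos_le_one t⟩, chebT_cos]
    have h1 := (hasSum_integral_log_abs_cos_sub_cos_mul hsum0 φ).mul_left (-(1 / (2 * π)))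
    have hterm : ∀ n : ℕ, -(1 / (2 * π)) * (-(2 * π * sigmaCheb n) * c n * cos (n * φ))
        = fourierCheb g n * cos (n * φ) := by
      intro n
      have := (sigmaCheb_pos n).ne'
      simp only [hc]
      field_simp
    simp only [hterm] at h1
    simp only [← mul_div_assoc]
    rw [integral_div_sqrt_one_sub_sq
      (fun y => log |cos φ - y| * ∑' n, c n * chebExt n y)]
    simp only [hA]
    exact h1.unique (hasSum_fourierCheb_mul_cos hg φ)
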